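/- arXiv:2012.02563 — 2 statements merged into one kernel-verified Lean document; each statement's English description precedes it below -/
import Mathlib

section
/- For every nonnegative integer n and every complex number x, ∑_{k=0}^{n} C(n,k)^2 · C(x,k) · C(x,n−k) = ∑_{k=0}^{n} C(x,n−k) · C(x+k,k) · C(2(n−k),n) · C(n,k). -/
/-- The generalized binomial coefficient `x(x-1)⋯(x-j+1)/j!` for complex `x`. -/
noncomputable def cchoose (x : ℂ) (j : ℕ) : ℂ :=
  (∏ i ∈ Finset.range j, (x - i)) / (j.factorial : ℂ)

open Finset in
/-- Chu–Vandermonde convolution with the sum indexed by a range. -/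
theorem Ring.add_choose_eq_sum_range {R : Type*} [CommRing R] [BinomialRing R] (r s : R) (k : ℕ) :
    Ring.choose (r + s) k =
      ∑ j ∈ range (k + 1), Ring.choose r j * Ring.choose s (k - j) := by
  rw [Ring.add_choose_eq k (Commute.all r s), Finset.Nat.sum_antidiagonal_eq_sum_range_succ_mk]

open Finset in
/-- Since `k.choose j` vanishes for `j > k`, the range of summation may be extended. -/
theorem Ring.choose_add_natCast_self {R : Type*} [CommRing R] [BinomialRing R] (x : R)
    {k l : ℕ} (hkl : k ≤ l) :
    Ring.choose (x + k) k = ∑ j ∈ range (l + 1), Ring.choose x j * (k.choose j : R) := by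
  rw [Ring.add_choose_eq_sum_range]
  refine (sum_congr rfl fun j hj => ?_).trans
    (sum_subset (range_mono (Nat.succ_le_succ hkl)) fun j _ hj => ?_)
  · rw [Ring.choose_natCast, Nat.choose_symm (mem_range_succ_iff.mp hj)]
  · rw [Nat.choose_eq_zero_of_lt (by simpa using hj), Nat.cast_zero, mul_zero]

open Finset in
theorem Ring.sum_choose_mul_choose_mul_choose_sub {R : Type*} [CommRing R] [BinomialRing R]
    (x : R) (a : ℕ) {j l : ℕ} (hjl : j ≤ l) :
    ∑ k ∈ range (l + 1), (a.choose k : R) * k.choose j * Ring.choose (x - a) (l - k) =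
      a.choose j * Ring.choose (x - j) (l - j) := by
  obtain ⟨p, rfl⟩ := Nat.exists_eq_add_of_le hjl
  rw [add_assoc, sum_range_add, sum_eq_zero, zero_add]
  · have hterm : ∀ i, (a.choose (j + i) : R) * (j + i).choose j =
        a.choose j * (a - j).choose i := fun i => by
      have := Nat.choose_mul (n := a) (Nat.le_add_right j i)
      rw [Nat.add_sub_cancel_left] at this
      rw [← Nat.cast_mul, this, Nat.cast_mul]
    simp only [hterm, Nat.add_sub_add_left, mul_assoc, ← mul_sum, Nat.add_sub_cancel_left]
    obtain hja | hja := le_or_gt j a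
    · rw [show x - j = ((a - j : ℕ) : R) + (x - a) by push_cast [hja]; ring,
        Ring.add_choose_eq_sum_range]
      simp only [Ring.choose_natCast]
    · simp [Nat.choose_eq_zero_of_lt hja]
  · intro k hk
    simp [Nat.choose_eq_zero_of_lt (mem_range.mp hk)]

open Finset in
/-- A form of the Pfaff–Saalschütz summation. -/
theorem Ring.sum_choose_mul_choose_sub_mul_choose_add {R : Type*} [CommRing R] [BinomialRing R]
    (x : R) (a l : ℕ) :
    ∑ k ∈ range (l + 1),
        (a.choose k : R) * Ring.choose (x - a) (l - k) * Ring.choose (x + k) k =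
      (a + l).choose l * Ring.choose x l := by
  calc
    _ = ∑ k ∈ range (l + 1), ∑ j ∈ range (l + 1), Ring.choose x j *
          ((a.choose k : R) * k.choose j * Ring.choose (x - a) (l - k)) := by
      refine sum_congr rfl fun k hk => ?_
      rw [Ring.choose_add_natCast_self x (mem_range_succ_iff.mp hk), mul_sum]
      exact sum_congr rfl fun j _ => by ring
    _ = ∑ j ∈ range (l + 1), Ring.choose (a : R) j * (l.choose j : R) * Ring.choose x l := by
      rw [sum_comm]
      refine sum_congr rfl fun j hj => ?_
      have hjl := mem_range_succ_iff.mp hj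
      have h := Ring.choose_smul_choose x hjl
      rw [nsmul_eq_mul] at h
      rw [← mul_sum, Ring.sum_choose_mul_choose_mul_choose_sub x a hjl, Ring.choose_natCast,
        mul_assoc, h]
      ring
    _ = _ := by
      rw [← sum_mul, ← Ring.choose_add_natCast_self (a : R) le_rfl, ← Nat.cast_add,
        Ring.choose_natCast]

open Finset in
theorem Nat.choose_two_mul_mul_choose (n k : ℕ) :
    (2 * (n - k)).choose n * n.choose k =
      ∑ l ∈ range (n + 1), n.choose l * (n - l).choose k * (n - k).choose (n - l) := by
  rw [two_mul, Nat.add_choose_eq, Finset.Nat.sum_antidiagonal_eq_sum_range_succ_mk, sum_mul]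
  refine sum_congr rfl fun l _ => ?_
  have h : n.choose k * (n - k).choose l = n.choose l * (n - l).choose k := by
    have h₁ := Nat.choose_mul (n := n) (Nat.le_add_right k l)
    have h₂ := Nat.choose_mul (n := n) (Nat.le_add_left l k)
    rw [Nat.add_sub_cancel_left] at h₁
    rw [Nat.add_sub_cancel, ← Nat.choose_symm_add] at h₂
    exact h₁.symm.trans h₂
  rw [← h]
  ring

open Finset in
/-- The generalized Strehl identity in a commutative binomial ring. -/
theorem Ring.sum_choose_sq_mul_choose_mul_choose {R : Type*} [CommRing R] [BinomialRing R]
    (n : ℕ) (x : R) :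
    ∑ k ∈ range (n + 1), (n.choose k : R) ^ 2 * Ring.choose x k * Ring.choose x (n - k) =
      ∑ k ∈ range (n + 1),
        Ring.choose x (n - k) * Ring.choose (x + k) k * ((2 * (n - k)).choose n : R) *
          (n.choose k : R) := by
  symm
  calc
    _ = ∑ k ∈ range (n + 1), ∑ l ∈ range (n + 1), (n.choose l : R) * ((n - l).choose k *
          ((n - k).choose (n - l) * Ring.choose x (n - k)) * Ring.choose (x + k) k) := by
      refine sum_congr rfl fun k _ => ?_
      have h := congrArg (Nat.cast (R := R)) (Nat.choose_two_mul_mul_choose n k)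
      push_cast at h
      rw [mul_assoc, h, mul_sum]
      exact sum_congr rfl fun l _ => by ring
    _ = ∑ l ∈ range (n + 1), (n.choose l : R) * ∑ k ∈ range (l + 1), (n - l).choose k *
          (Ring.choose x (n - l) * Ring.choose (x - (n - l : ℕ)) (l - k)) *
            Ring.choose (x + k) k := by
      rw [sum_comm]
      refine sum_congr rfl fun l hl => ?_
      have hln := mem_range_succ_iff.mp hl
      rw [← mul_sum]
      congr 1
      symm
      refine (sum_congr rfl fun k hk => ?_).trans
        (sum_subset (range_mono (Nat.succ_le_succ hln)) fun k hkn hk => ?_)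
      · have hkl := mem_range_succ_iff.mp hk
        have h := Ring.choose_smul_choose x (show n - l ≤ n - k by lia)
        rw [nsmul_eq_mul, show n - k - (n - l) = l - k by lia] at h
        rw [h]
      · have hkn := mem_range_succ_iff.mp hkn
        have hlk : l < k := by simpa using hk
        simp [Nat.choose_eq_zero_of_lt (show n - k < n - l by lia)]
    _ = _ := by
      refine sum_congr rfl fun l hl => ?_
      have hln := mem_range_succ_iff.mp hl
      have h := Ring.sum_choose_mul_choose_sub_mul_choose_add x (n - l) l
      rw [Nat.sub_add_cancel hln] at h
      rw [show (n.choose l : R) ^ 2 * Ring.choose x l * Ring.choose x (n - l) =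
        n.choose l * (Ring.choose x (n - l) * (n.choose l * Ring.choose x l)) by ring, ← h,
        mul_sum (range (l + 1)) _ (Ring.choose x (n - l))]
      congr 1
      exact sum_congr rfl fun k _ => by ring

theorem cchoose_eq_ringChoose (x : ℂ) (j : ℕ) : cchoose x j = Ring.choose x j := by
  have h : (descPochhammer ℤ j).smeval x = ∏ i ∈ Finset.range j, (x - i) := by
    induction j with
    | zero => simp
    | succ j ih =>
      rw [descPochhammer_succ_right, Polynomial.smeval_mul, ih, Finset.prod_range_succ,
        Polynomial.smeval_sub, Polynomial.smeval_X, Polynomial.smeval_natCast]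
      simp
  rw [cchoose, Ring.choose_eq_smul, h, smul_eq_mul, div_eq_inv_mul]

theorem general_strehl_identity (n : ℕ) (x : ℂ) :
    ∑ k ∈ Finset.range (n + 1),
        (n.choose k : ℂ) ^ 2 * cchoose x k * cchoose x (n - k) =
      ∑ k ∈ Finset.range (n + 1),
        cchoose x (n - k) * cchoose (x + (k : ℂ)) k * ((2 * (n - k)).choose n : ℂ) *
          (n.choose k : ℂ) := by
  simp only [cchoose_eq_ringChoose]
  exact Ring.sum_choose_sq_mul_choose_mul_choose n x
end

section
/- For every nonnegative integer n, ∑_{k=0}^{n} C(n,k)^2 · C(n+k,k) · C(2n−k,n) = ∑_{k=0}^{n} C(n,k)^2 · C(2n−k,n) · C(2(n−k),n). -/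
/-- Vandermonde's identity as a sum over any range containing the support. -/
theorem sum_range_choose_mul_choose_sub (r s k K : ℕ) (hK : K ≤ k + 1) (hr : r < K) :
    ∑ i ∈ Finset.range K, r.choose i * s.choose (k - i) = (r + s).choose k := by
  rw [Nat.add_choose_eq, Finset.Nat.sum_antidiagonal_eq_sum_range_succ_mk]
  refine Finset.sum_subset (Finset.range_mono hK) fun i _ hi => ?_
  rw [Finset.mem_range, not_lt] at hi
  rw [Nat.choose_eq_zero_of_lt (by omega), zero_mul]

theorem sum_range_choose_mul_choose (a m K : ℕ) (hK : m < K) :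
    ∑ l ∈ Finset.range K, a.choose l * m.choose l = (a + m).choose m := by
  rw [Nat.add_choose_eq, Finset.Nat.sum_antidiagonal_eq_sum_range_succ_mk]
  symm
  refine (Finset.sum_congr rfl fun l hl => ?_).trans
    (Finset.sum_subset (Finset.range_mono (by omega : m + 1 ≤ K)) fun l _ hl => ?_)
  · rw [Finset.mem_range] at hl
    rw [Nat.choose_symm (by omega)]
  · rw [Finset.mem_range, not_lt] at hl
    rw [Nat.choose_eq_zero_of_lt (by omega : m < l), mul_zero]

/-- Trinomial symmetry: choosing disjoint subsets of sizes `k` and `i` in either order. -/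
theorem choose_mul_choose_sub_comm (n k i : ℕ) :
    n.choose k * (n - k).choose i = n.choose i * (n - i).choose k := by
  have h₁ := Nat.choose_mul (n := n) (Nat.le_add_right k i)
  have h₂ := Nat.choose_mul (n := n) (Nat.le_add_left i k)
  rw [Nat.add_sub_cancel_left] at h₁
  rw [Nat.add_sub_cancel] at h₂
  rw [← h₁, ← h₂, Nat.choose_symm_add]

theorem choose_mul_choose_sub_sub (n k i : ℕ) (hi : i ≤ n) :
    n.choose k * (n - k).choose (n - i) = n.choose i * i.choose k := by
  rw [choose_mul_choose_sub_comm, Nat.choose_symm hi, Nat.sub_sub_self hi]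

/-- The Riordan–Surányi product formula for binomial coefficients. -/
theorem sum_range_choose_mul_choose_mul_choose (a b N K : ℕ) (hK : b < K) :
    ∑ l ∈ Finset.range K, a.choose l * b.choose l * (N + a + (b - l)).choose (a + b) =
      (N + a).choose a * (N + b).choose b := by
  have expand : ∀ l, (N + a + (b - l)).choose (a + b) =
      ∑ m ∈ Finset.range (b + 1), (b - l).choose (b - m) * (N + a).choose (a + m) := fun l => by
    rw [add_comm (N + a), ← sum_range_choose_mul_choose_sub (b - l) (N + a) (a + b) (b + 1)
      (by omega) (by omega), ← Finset.sum_range_reflect]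
    refine Finset.sum_congr rfl fun m hm => ?_
    rw [Finset.mem_range] at hm
    congr 2
    omega
  calc _ = ∑ l ∈ Finset.range K, ∑ m ∈ Finset.range (b + 1),
        (N + a).choose (a + m) * b.choose m * (a.choose l * m.choose l) := by
        refine Finset.sum_congr rfl fun l _ => ?_
        rw [expand, Finset.mul_sum]
        refine Finset.sum_congr rfl fun m hm => ?_
        rw [Finset.mem_range] at hm
        linear_combination (a.choose l * (N + a).choose (a + m)) *
          choose_mul_choose_sub_sub b l m (by omega)
    _ = ∑ m ∈ Finset.range (b + 1), (N + a).choose a * (N.choose m * b.choose m) := by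
        rw [Finset.sum_comm]
        refine Finset.sum_congr rfl fun m hm => ?_
        rw [Finset.mem_range] at hm
        rw [← Finset.mul_sum, sum_range_choose_mul_choose a m K (by omega)]
        have h : (N + a).choose (a + m) * (a + m).choose a = (N + a).choose a * N.choose m := by
          rw [Nat.choose_mul (by omega), Nat.add_sub_cancel, Nat.add_sub_cancel_left]
        rw [← Nat.choose_symm_add]
        linear_combination b.choose m * h
    _ = _ := by
        rw [← Finset.mul_sum, sum_range_choose_mul_choose N b _ (by omega)]

theorem neg_n_sub_one_specialization (n : ℕ) :
    ∑ k ∈ Finset.range (n + 1),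
        (n.choose k) ^ 2 * ((n + k).choose k) * ((2 * n - k).choose n) =
      ∑ k ∈ Finset.range (n + 1),
        (n.choose k) ^ 2 * ((2 * n - k).choose n) * ((2 * (n - k)).choose n) := by
  calc _ = ∑ i ∈ Finset.range (n + 1), ∑ k ∈ Finset.range (n + 1),
        (n.choose i) ^ 2 * (i.choose k * (n - i).choose k * (2 * n - k).choose n) := by
        refine Finset.sum_congr rfl fun i hi => ?_
        rw [Finset.mem_range] at hi
        have h := sum_range_choose_mul_choose_mul_choose i (n - i) n (n + 1) (by omega)
        rw [← Finset.mul_sum, mul_assoc,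
          ← Nat.choose_symm_of_eq_add (by omega : 2 * n - i = n - i + n),
          show 2 * n - i = n + (n - i) by omega, ← h]
        congr 1
        refine Finset.sum_congr rfl fun k _ => ?_
        rcases Nat.lt_or_ge (n - i) k with hk | hk
        · simp [Nat.choose_eq_zero_of_lt hk]
        · congr 2 <;> omega
    _ = _ := by
        rw [Finset.sum_comm]
        refine Finset.sum_congr rfl fun k _ => ?_
        rw [two_mul (n - k), ← sum_range_choose_mul_choose_sub (n - k) (n - k) n (n + 1)
          le_rfl (by omega), Finset.mul_sum]
        refine Finset.sum_congr rfl fun i hi => ?_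
        rw [Finset.mem_range] at hi
        have h₁ := choose_mul_choose_sub_comm n k i
        have h₂ := choose_mul_choose_sub_sub n k i (by omega)
        calc _ = (n.choose i * (n - i).choose k) * (n.choose i * i.choose k) *
              (2 * n - k).choose n := by ring
          _ = _ := by rw [← h₁, ← h₂]; ring
end
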